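/- Let p be an odd prime, F/ℚ_p a finite unramified extension, a ∈ 𝒪_F \ 𝒪_F^p with p ∤ v_F(a), and s ≥ 0 an integer. Let L_{1,s} = F(ζ_p, a^{1/p^s}), assumed totally ramified over F of degree p^s(p−1). Then the unique ramification jump of L_{1,s+1}/L_{1,s} equals p^{s+1}. -/

import Mathlib

/-- The `ℤ_[p]`-algebra structure on a field `L` over `ℚ_[p]`. -/
noncomputable def padicIntAlgebra (p : ℕ) [Fact p.Prime] (L : Type*) [Field L]
    [Algebra ℚ_[p] L] : Algebra ℤ_[p] L :=
  ((algebraMap ℚ_[p] L).comp (algebraMap ℤ_[p] ℚ_[p])).toAlgebra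

/-- The ring of integers of a `p`-adic field `L`, i.e. the integral closure of `ℤ_[p]` in `L`. -/
noncomputable def ringOfInt (p : ℕ) [Fact p.Prime] (L : Type*) [Field L]
    [Algebra ℚ_[p] L] : Subring L :=
  letI := padicIntAlgebra p L
  (integralClosure ℤ_[p] L).toSubring

/-- The maximal ideal of the ring of integers of `L` (its Jacobson radical). -/
noncomputable def maxIdeal (p : ℕ) [Fact p.Prime] (L : Type*) [Field L]
    [Algebra ℚ_[p] L] : Ideal (ringOfInt p L) :=
  (⊥ : Ideal (ringOfInt p L)).jacobson

/-- The `i`-th ramification group (in lower numbering) of `L/K`, as a subset of `Gal(L/K)`: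
`σ ∈ G_i` iff `σ x - x ∈ 𝔭_L ^ (i+1)` for every `x` in the ring of integers of `L`. -/
noncomputable def ramSet (p : ℕ) [Fact p.Prime] (K L : Type*) [Field K] [Field L]
    [Algebra ℚ_[p] L] [Algebra K L] (i : ℕ) : Set (L ≃ₐ[K] L) :=
  {σ | ∀ x : ringOfInt p L, ∃ y ∈ maxIdeal p L ^ (i + 1), (y : L) = σ (x : L) - (x : L)}

/-- `t` is a ramification jump of `L/K` if `G_t ≠ G_{t+1}`. -/
noncomputable def IsRamJump (p : ℕ) [Fact p.Prime] (K L : Type*) [Field K] [Field L]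
    [Algebra ℚ_[p] L] [Algebra K L] (t : ℕ) : Prop :=
  ramSet p K L t ≠ ramSet p K L (t + 1)

/-- `L/K` has a unique ramification jump, equal to `t`. -/
noncomputable def HasUniqueRamJump (p : ℕ) [Fact p.Prime] (K L : Type*) [Field K] [Field L]
    [Algebra ℚ_[p] L] [Algebra K L] (t : ℕ) : Prop :=
  IsRamJump p K L t ∧ ∀ t', IsRamJump p K L t' → t' = t

/-- Same as `HasUniqueRamJump`, with the `K`-algebra structure on `L` given by an
explicit ring homomorphism. -/
noncomputable def HasUniqueRamJumpHom (p : ℕ) [Fact p.Prime] (K L : Type*) [Field K] [Field L]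
    [Algebra ℚ_[p] L] (f : K →+* L) (t : ℕ) : Prop :=
  letI := f.toAlgebra
  HasUniqueRamJump p K L t

/-- The absolute ramification index `e(L|ℚ_p)`, i.e. the valuation of `p` in `L`. -/
noncomputable def eAbs (p : ℕ) [Fact p.Prime] (L : Type*) [Field L] [Algebra ℚ_[p] L] : ℕ :=
  sSup {n : ℕ | Ideal.span {(p : ringOfInt p L)} ≤ maxIdeal p L ^ n}

/-- The normalized valuation `v_L(x)` of an integral element `x` of `L`. -/
noncomputable def valInt (p : ℕ) [Fact p.Prime] (L : Type*) [Field L] [Algebra ℚ_[p] L]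
    (x : L) : ℕ :=
  sSup {n : ℕ | ∃ y ∈ maxIdeal p L ^ n, (y : L) = x}

/-!
Write `K = L_{1,s}`, `M = L_{1,s+1}` and `β = a^{1/p^{s+1}}`, a Kummer generator of `M/K`. Since
`v_M(β) = (p-1) v_F(a)` is prime to `p` while `v_M(K^×) ⊆ pℤ`, the monomials `c β^k` with `c ∈ K`
and `0 ≤ k < p` have pairwise distinct valuations, so the valuation of `x = ∑ c_k β^k` is that of
its leading term. A nontrivial `σ` multiplies `β` by a primitive `p`-th root of unity `η`, hence
raises the valuation of every monomial with `0 < k` by exactly `t = v_M(η - 1) = e_M/(p-1)`.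
An integral monomial with `0 < k` has valuation at least `1`, with equality for the leading term of
a uniformizer, so `σ` lies in `G_t` but not in `G_{t+1}`.
-/

open WithZero

section RingOfIntegers

variable (p : ℕ) [Fact p.Prime] (K M : Type*) [Field K] [Field M] [Algebra ℚ_[p] K]
  [Algebra ℚ_[p] M]

noncomputable local instance algebraPadicInt : Algebra ℤ_[p] M := padicIntAlgebra p M

instance isScalarTower_padicInt : IsScalarTower ℤ_[p] ℚ_[p] M := .of_algebraMap_eq fun _ ↦ rfl

lemma natCast_prime_ne_zero : (p : M) ≠ 0 := by
  rw [← map_natCast (algebraMap ℚ_[p] M), map_ne_zero]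
  exact_mod_cast (Fact.out : p.Prime).ne_zero

variable {p K M}

lemma mem_ringOfInt_iff_isIntegral {x : M} : x ∈ ringOfInt p M ↔ IsIntegral ℤ_[p] x :=
  Iff.rfl

lemma algebraMap_mem_ringOfInt [Algebra K M] [IsScalarTower ℚ_[p] K M] {x : K}
    (hx : x ∈ ringOfInt p K) : algebraMap K M x ∈ ringOfInt p M :=
  IsIntegral.map ((IsScalarTower.toAlgHom ℚ_[p] K M).restrictScalars ℤ_[p]) hx

lemma algebraMap_padic_mem_ringOfInt_iff {x : ℚ_[p]} :
    algebraMap ℚ_[p] M x ∈ ringOfInt p M ↔ ‖x‖ ≤ 1 := by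
  rw [mem_ringOfInt_iff_isIntegral, isIntegral_algebraMap_iff (algebraMap ℚ_[p] M).injective,
    IsIntegrallyClosed.isIntegral_iff]
  exact ⟨fun ⟨y, hy⟩ ↦ hy ▸ y.2, fun h ↦ ⟨⟨x, h⟩, rfl⟩⟩

variable (p M) in
lemma inv_natCast_prime_notMem_ringOfInt : (p : M)⁻¹ ∉ ringOfInt p M := by
  rw [← map_natCast (algebraMap ℚ_[p] M), ← map_inv₀, algebraMap_padic_mem_ringOfInt_iff, norm_inv,
    Padic.norm_p, inv_inv, not_le]
  exact_mod_cast (Fact.out : p.Prime).one_lt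

variable [FiniteDimensional ℚ_[p] M]

lemma mem_ringOfInt_of_spectralNorm_le_one {x : M} (hx : spectralNorm ℚ_[p] M x ≤ 1) :
    x ∈ ringOfInt p M := by
  have hmonic : (minpoly ℚ_[p] x).Monic := minpoly.monic (.of_finite ℚ_[p] x)
  have hcoeff : ∀ n, ‖(minpoly ℚ_[p] x).coeff n‖ ≤ 1 := (spectralValue_le_one_iff hmonic).1 hx
  obtain ⟨q, hq, -, hqmonic⟩ := Polynomial.lifts_and_natDegree_eq_and_monic
    (f := algebraMap ℤ_[p] ℚ_[p]) (p := minpoly ℚ_[p] x)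
    ((Polynomial.lifts_iff_coeff_lifts _).2 fun n ↦ ⟨⟨_, hcoeff n⟩, rfl⟩) hmonic
  refine ⟨q, hqmonic, ?_⟩
  rw [← Polynomial.aeval_def, ← Polynomial.aeval_map_algebraMap ℚ_[p], hq, minpoly.aeval]

lemma mem_or_inv_mem_ringOfInt (x : M) : x ∈ ringOfInt p M ∨ x⁻¹ ∈ ringOfInt p M := by
  rcases le_total (spectralMulAlgNorm ℚ_[p] M x) 1 with h | h
  · exact .inl (mem_ringOfInt_of_spectralNorm_le_one h)
  · refine .inr (mem_ringOfInt_of_spectralNorm_le_one ?_)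
    change spectralMulAlgNorm ℚ_[p] M x⁻¹ ≤ 1
    rw [map_inv₀]
    exact inv_le_one_of_one_le₀ h

instance isFractionRing_ringOfInt : IsFractionRing (ringOfInt p M) M :=
  integralClosure.isFractionRing_of_finite_extension ℚ_[p] M

instance isDiscreteValuationRing_ringOfInt : IsDiscreteValuationRing (ringOfInt p M) := by
  have : IsDedekindDomain (ringOfInt p M) := integralClosure.isDedekindDomain ℤ_[p] ℚ_[p] M
  have : ValuationRing (ringOfInt p M) :=
    (ValuationRing.iff_isInteger_or_isInteger (ringOfInt p M) M).2 fun x ↦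
      (mem_or_inv_mem_ringOfInt (p := p) x).imp (fun h ↦ ⟨⟨x, h⟩, rfl⟩) (fun h ↦ ⟨⟨_, h⟩, rfl⟩)
  have hfield : ¬ IsField (ringOfInt p M) := by
    intro h
    obtain ⟨y, hy⟩ := h.mul_inv_cancel (a := (p : ringOfInt p M)) fun hp0 ↦
      natCast_prime_ne_zero p M (congrArg Subtype.val hp0)
    refine inv_natCast_prime_notMem_ringOfInt p M ?_
    have hinv : (y : M) = (p : M)⁻¹ := eq_inv_of_mul_eq_one_right (congrArg Subtype.val hy)
    exact hinv ▸ y.2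
  exact ((IsDiscreteValuationRing.TFAE _ hfield).out 0 2).2 ‹_›

lemma maxIdeal_eq_maximalIdeal :
    maxIdeal p M = IsLocalRing.maximalIdeal (ringOfInt p M) :=
  IsLocalRing.jacobson_eq_maximalIdeal _ bot_ne_top

end RingOfIntegers

section NormalizedVal

variable (p : ℕ) [Fact p.Prime] (K M : Type*) [Field K] [Field M] [Algebra ℚ_[p] K]
  [Algebra ℚ_[p] M]

lemma eAbs_eq_valInt : eAbs p M = valInt p M (p : M) := by
  unfold eAbs valInt
  congr 1 with n
  simp only [Ideal.span_singleton_le_iff_mem]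
  refine ⟨fun h ↦ ⟨_, h, rfl⟩, fun ⟨y, hy, hyp⟩ ↦ ?_⟩
  obtain rfl : y = p := Subtype.ext hyp
  exact hy

variable [FiniteDimensional ℚ_[p] K] [FiniteDimensional ℚ_[p] M]

/-- The discrete valuation of a finite extension `M` of `ℚ_[p]`, written multiplicatively and
normalized so that a uniformizer has value `exp (-1)`: the paper's `v_M(x)` is
`-log (normalizedVal p M x)` for `x ≠ 0`. -/
noncomputable def normalizedVal : Valuation M ℤᵐ⁰ :=
  (IsDiscreteValuationRing.maximalIdeal (ringOfInt p M)).valuation M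

lemma exists_normalizedVal_eq_exp_neg_one : ∃ π, normalizedVal p M π = exp (-1) :=
  (IsDiscreteValuationRing.maximalIdeal (ringOfInt p M)).valuation_exists_uniformizer M

variable {p K M}

lemma mem_ringOfInt_iff_normalizedVal_le_one {x : M} :
    x ∈ ringOfInt p M ↔ normalizedVal p M x ≤ 1 := by
  refine ⟨fun hx ↦ ?_, fun hx ↦ ?_⟩
  · exact (IsDiscreteValuationRing.maximalIdeal (ringOfInt p M)).valuation_le_one ⟨x, hx⟩
  · obtain ⟨y, rfl⟩ := IsDiscreteValuationRing.exists_lift_of_le_one hx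
    exact y.2

lemma exists_mem_maxIdeal_pow_iff {n : ℕ} {x : M} :
    (∃ y ∈ maxIdeal p M ^ n, (y : M) = x) ↔ normalizedVal p M x ≤ exp (-(n : ℤ)) := by
  have hmem (y : ringOfInt p M) :
      normalizedVal p M y ≤ exp (-(n : ℤ)) ↔ y ∈ maxIdeal p M ^ n := by
    rw [maxIdeal_eq_maximalIdeal]
    refine .trans ?_ ((IsDiscreteValuationRing.maximalIdeal _).intValuation_le_pow_iff_mem y n)
    exact iff_of_eq
      (congrArg (· ≤ _) (IsDedekindDomain.HeightOneSpectrum.valuation_of_algebraMap _ y))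
  refine ⟨fun ⟨y, hy, hyx⟩ ↦ hyx ▸ (hmem y).2 hy, fun hx ↦ ?_⟩
  have hxO : x ∈ ringOfInt p M := mem_ringOfInt_iff_normalizedVal_le_one.2
    (hx.trans (by rw [← exp_zero, exp_le_exp]; lia))
  exact ⟨⟨x, hxO⟩, (hmem _).1 hx, rfl⟩

lemma log_normalizedVal_eq_neg_valInt {x : M} (hx0 : x ≠ 0) (hx : x ∈ ringOfInt p M) :
    log (normalizedVal p M x) = -(valInt p M x : ℤ) := by
  have hwx : normalizedVal p M x ≠ 0 := (Valuation.ne_zero_iff _).2 hx0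
  have hle : log (normalizedVal p M x) ≤ 0 := by
    rw [log_le_iff_le_exp hwx, exp_zero]
    exact mem_ringOfInt_iff_normalizedVal_le_one.1 hx
  obtain ⟨m, hm⟩ := Int.eq_ofNat_of_zero_le (neg_nonneg.2 hle)
  have hset : {n : ℕ | ∃ y ∈ maxIdeal p M ^ n, (y : M) = x} = Set.Iic m := by
    ext n
    rw [Set.mem_ofPred_eq, exists_mem_maxIdeal_pow_iff, ← log_le_iff_le_exp hwx, Set.mem_Iic]
    lia
  rw [valInt, hset, csSup_Iic]
  lia

variable (p M) in
lemma log_normalizedVal_prime : log (normalizedVal p M (p : M)) = -(eAbs p M : ℤ) := by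
  rw [eAbs_eq_valInt]
  exact log_normalizedVal_eq_neg_valInt (natCast_prime_ne_zero p M) (natCast_mem _ p)

variable (p M) in
lemma eAbs_ne_zero : eAbs p M ≠ 0 := by
  intro he
  have hp0 : normalizedVal p M (p : M) ≠ 0 :=
    (Valuation.ne_zero_iff _).2 (natCast_prime_ne_zero p M)
  have hp1 : normalizedVal p M (p : M) = 1 := by
    rw [← exp_log hp0, log_normalizedVal_prime, he, Nat.cast_zero, neg_zero, exp_zero]
  refine inv_natCast_prime_notMem_ringOfInt p M (mem_ringOfInt_iff_normalizedVal_le_one.2 ?_)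
  rw [map_inv₀, hp1, inv_one]

section Tower

variable [Algebra K M] [IsScalarTower ℚ_[p] K M]

lemma normalizedVal_algebraMap_mono {x y : K} (h : normalizedVal p K x ≤ normalizedVal p K y) :
    normalizedVal p M (algebraMap K M x) ≤ normalizedVal p M (algebraMap K M y) := by
  rcases eq_or_ne y 0 with rfl | hy
  · rw [map_zero, le_zero_iff, map_eq_zero] at h
    rw [h]
  have hquot : x / y ∈ ringOfInt p K := mem_ringOfInt_iff_normalizedVal_le_one.2 <| by
    rw [map_div₀]
    exact div_le_one_of_le₀ h zero_le
  calc normalizedVal p M (algebraMap K M x)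
      = normalizedVal p M (algebraMap K M (x / y)) * normalizedVal p M (algebraMap K M y) := by
        rw [← map_mul, ← map_mul, div_mul_cancel₀ x hy]
    _ ≤ normalizedVal p M (algebraMap K M y) := mul_le_of_le_one_left'
        (mem_ringOfInt_iff_normalizedVal_le_one.1 (algebraMap_mem_ringOfInt hquot))

lemma log_normalizedVal_algebraMap {n : ℕ} (hn : eAbs p M = n * eAbs p K) (x : K) :
    log (normalizedVal p M (algebraMap K M x)) = n * log (normalizedVal p K x) := by
  rcases eq_or_ne x 0 with rfl | hx
  · simp
  -- A power of `x` has the value of a power of `p`, whose value is known in both fields.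
  have hval : normalizedVal p K (x ^ (-eAbs p K : ℤ)) =
      normalizedVal p K ((p : K) ^ log (normalizedVal p K x)) := by
    have hx' : normalizedVal p K (x ^ (-eAbs p K : ℤ)) ≠ 0 :=
      (Valuation.ne_zero_iff _).2 (zpow_ne_zero _ hx)
    have hp' : normalizedVal p K ((p : K) ^ log (normalizedVal p K x)) ≠ 0 :=
      (Valuation.ne_zero_iff _).2 (zpow_ne_zero _ (natCast_prime_ne_zero p K))
    rw [← exp_log hx', ← exp_log hp', map_zpow₀, map_zpow₀, log_zpow, log_zpow,
      log_normalizedVal_prime, smul_eq_mul, smul_eq_mul, mul_comm]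
  have hlog := congrArg log ((normalizedVal_algebraMap_mono (M := M) hval.le).antisymm
    (normalizedVal_algebraMap_mono hval.ge))
  rw [map_zpow₀, map_zpow₀, map_zpow₀, map_zpow₀, map_natCast, log_zpow, log_zpow,
    log_normalizedVal_prime, hn, smul_eq_mul, smul_eq_mul, Nat.cast_mul] at hlog
  refine mul_left_cancel₀ (show (eAbs p K : ℤ) ≠ 0 by exact_mod_cast eAbs_ne_zero p K) ?_
  linarith

lemma log_normalizedVal_of_pow_eq_algebraMap {n m : ℕ} (hn : n ≠ 0)
    (he : eAbs p M = n * m * eAbs p K) {x : K} {y : M} (hy : y ^ n = algebraMap K M x) :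
    log (normalizedVal p M y) = m * log (normalizedVal p K x) := by
  have hlog := log_normalizedVal_algebraMap he x
  rw [← hy, map_pow, log_pow, nsmul_eq_mul, Nat.cast_mul, mul_assoc] at hlog
  exact mul_left_cancel₀ (Nat.cast_ne_zero.2 hn) hlog

end Tower

lemma eAbs_eq_one_of_maxIdeal_eq_span (h : maxIdeal p M = Ideal.span {(p : ringOfInt p M)}) :
    eAbs p M = 1 := by
  have hset : {n : ℕ | Ideal.span {(p : ringOfInt p M)} ≤ maxIdeal p M ^ n} = Set.Iic 1 := by
    ext n
    have hanti : StrictAnti (maxIdeal p M ^ · : ℕ → Ideal (ringOfInt p M)) := by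
      rw [maxIdeal_eq_maximalIdeal]
      exact Ideal.pow_right_strictAnti _ (IsDiscreteValuationRing.not_a_field _)
        (Ideal.IsPrime.ne_top')
    rw [Set.mem_ofPred_eq, ← h, Set.mem_Iic]
    simpa using hanti.le_iff_ge (a := 1) (b := n)
  rw [eAbs, hset, csSup_Iic]

end NormalizedVal

lemma exists_map_sum_eq_of_injOn {R Γ₀ ι : Type*} [Ring R] [LinearOrderedCommMonoidWithZero Γ₀]
    (w : Valuation R Γ₀) {s : Finset ι} (hs : s.Nonempty) {f : ι → R}
    (hf : ∀ i ∈ s, ∀ j ∈ s, w (f i) ≠ 0 → w (f i) = w (f j) → i = j) :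
    ∃ i ∈ s, w (∑ j ∈ s, f j) = w (f i) ∧ ∀ j ∈ s, w (f j) ≤ w (f i) := by
  classical
  obtain ⟨i, hi, hmax⟩ := s.exists_max_image (fun j ↦ w (f j)) hs
  refine ⟨i, hi, ?_, hmax⟩
  rcases eq_or_ne (w (f i)) 0 with h0 | h0
  · exact le_antisymm (w.map_sum_le hmax) (h0 ▸ zero_le)
  · refine w.map_sum_eq_of_lt hi fun j hj ↦ ?_
    simp only [Finset.mem_sdiff, Finset.mem_singleton] at hj
    exact (hmax j hj.1).lt_of_ne fun h ↦ hj.2 (hf i hi j hj.1 h0 h.symm).symm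

lemma linearIndependent_of_map_smul_injective {K M Γ₀ ι : Type*} [Field K] [Field M] [Algebra K M]
    [LinearOrderedCommGroupWithZero Γ₀] (w : Valuation M Γ₀) {v : ι → M}
    (hv0 : ∀ i, v i ≠ 0)
    (hv : ∀ i j, ∀ c d : K, w (c • v i) ≠ 0 → w (c • v i) = w (d • v j) → i = j) :
    LinearIndependent K v := by
  refine linearIndependent_iff'.2 fun s c hc i hi ↦ ?_
  obtain ⟨j, -, hj, hmax⟩ := exists_map_sum_eq_of_injOn w ⟨i, hi⟩ (f := fun i ↦ c i • v i)
    fun i _ j _ ↦ hv i j (c i) (c j)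
  have hzero : w (c i • v i) ≤ 0 := (hmax i hi).trans_eq (by rw [← hj, hc, map_zero])
  rw [le_zero_iff, map_eq_zero, smul_eq_zero] at hzero
  exact hzero.resolve_right (hv0 i)

lemma map_pow_sub_one_of_isPrimitiveRoot {M Γ₀ : Type*} [Field M]
    [LinearOrderedCommGroupWithZero Γ₀] (w : Valuation M Γ₀) {n k : ℕ} (hn : n ≠ 0) {ζ : M}
    (hζ : IsPrimitiveRoot ζ n) (hk : k.Coprime n) : w (ζ ^ k - 1) = w (ζ - 1) := by
  have hone : w ζ = 1 := by
    rw [← pow_eq_one_iff_of_nonneg zero_le hn, ← map_pow, hζ.pow_eq_one, map_one]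
  let ζ' : w.integer := ⟨ζ, hone.le⟩
  have hζ' : IsPrimitiveRoot ζ' n :=
    .of_map_of_injective (f := w.integer.subtype) hζ w.integer.subtype_injective
  obtain ⟨u, hu⟩ := hζ'.associated_sub_one_pow_sub_one_of_coprime hk
  calc w (ζ ^ k - 1) = w ((ζ - 1) * u) := congrArg (fun x : w.integer ↦ w x) hu.symm
    _ = w (ζ - 1) * w u := map_mul ..
    _ = w (ζ - 1) :=
        mul_right_eq_self₀.2 (.inl ((Valuation.integer.integers w).one_of_isUnit u.isUnit))

lemma map_natCast_prime_eq_pow_of_isPrimitiveRoot {M Γ₀ : Type*} [Field M]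
    [LinearOrderedCommGroupWithZero Γ₀] (w : Valuation M Γ₀) {p : ℕ} (hp : p.Prime) {ζ : M}
    (hζ : IsPrimitiveRoot ζ p) : w p = w (ζ - 1) ^ (p - 1) := by
  obtain ⟨n, rfl⟩ := Nat.exists_eq_succ_of_ne_zero hp.ne_zero
  have hfactor : ∀ k ∈ Finset.range n, w (1 - ζ ^ (k + 1)) = w (ζ - 1) := fun k hk ↦ by
    rw [w.map_sub_swap, map_pow_sub_one_of_isPrimitiveRoot w hp.ne_zero hζ]
    exact (Nat.coprime_of_lt_prime k.succ_ne_zero (by simpa using hk) hp).symm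
  rw [Nat.succ_eq_add_one, Nat.cast_add_one, ← hζ.prod_one_sub_pow_eq_order, map_prod,
    Finset.prod_congr rfl hfactor, Finset.prod_const, Finset.card_range, Nat.add_sub_cancel]

lemma map_apply_smul_pow_sub {K M Γ₀ : Type*} [Field K] [Field M] [Algebra K M]
    [LinearOrderedCommGroupWithZero Γ₀] (w : Valuation M Γ₀) {n k : ℕ} (hn : n ≠ 0) {η : K}
    (hη : IsPrimitiveRoot η n) {σ : M ≃ₐ[K] M} {β : M} (hσ : σ β = η • β) (c : K)
    (hk : k.Coprime n) :
    w (σ (c • β ^ k) - c • β ^ k) = w (c • β ^ k) * w (algebraMap K M η - 1) := by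
  have hη' := hη.map_of_injective (algebraMap K M).injective
  have hmul : σ (c • β ^ k) - c • β ^ k = c • β ^ k * (algebraMap K M η ^ k - 1) := by
    rw [map_smul, map_pow, hσ, smul_pow, mul_sub_one, ← map_pow, mul_comm, ← Algebra.smul_def,
      smul_comm]
  rw [hmul, map_mul, map_pow_sub_one_of_isPrimitiveRoot w hn hη' hk]

open Polynomial in
lemma exists_isPrimitiveRoot_smul_eq {p : ℕ} [Fact p.Prime] {K M : Type*} [Field K] [Field M]
    [Algebra K M] (hroots : (primitiveRoots p K).Nonempty) {b : K} {β : M}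
    (hb : β ^ p = algebraMap K M b) (H : Irreducible (X ^ p - C b))
    [IsSplittingField K M (X ^ p - C b)] {σ : M ≃ₐ[K] M} (hσ : σ ≠ 1) :
    ∃ η : K, IsPrimitiveRoot η p ∧ σ β = η • β := by
  have : NeZero p := ⟨(Fact.out : p.Prime).ne_zero⟩
  let η := autEquivRootsOfUnity hroots H M σ
  have hη : orderOf η = p := orderOf_eq_prime (Subtype.ext η.2) (by simpa [η] using hσ)
  refine ⟨(η : Kˣ), ?_, (autEquivRootsOfUnity_smul hroots H M hb σ).symm⟩
  rw [IsPrimitiveRoot.coe_units_iff, IsPrimitiveRoot.iff_orderOf, Subgroup.orderOf_coe, hη]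

section KummerExpansion

variable {p : ℕ} [Fact p.Prime] {K M : Type*} [Field K] [Field M] [Algebra K M]
  {w : Valuation M ℤᵐ⁰} {β : M}

lemma intCast_log_smul_pow (hK : ∀ c : K, (p : ℤ) ∣ log (w (algebraMap K M c))) {c : K} {k : ℕ}
    (h0 : w (c • β ^ k) ≠ 0) :
    ((log (w (c • β ^ k)) : ℤ) : ZMod p) = k * ((log (w β) : ℤ) : ZMod p) := by
  rw [Algebra.smul_def, map_mul] at h0 ⊢
  rw [log_mul (left_ne_zero_of_mul h0) (right_ne_zero_of_mul h0), map_pow, log_pow, Int.cast_add,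
    (ZMod.intCast_zmod_eq_zero_iff_dvd _ p).2 (hK c), zero_add, nsmul_eq_mul, Int.cast_mul,
    Int.cast_natCast]

lemma not_dvd_log_smul_pow (hK : ∀ c : K, (p : ℤ) ∣ log (w (algebraMap K M c)))
    (hβ : ¬ (p : ℤ) ∣ log (w β)) {c : K} {k : ℕ} (hk : k.Coprime p) (h0 : w (c • β ^ k) ≠ 0) :
    ¬ (p : ℤ) ∣ log (w (c • β ^ k)) := by
  rw [← ZMod.intCast_zmod_eq_zero_iff_dvd] at hβ ⊢
  have hk' : (k : ZMod p) ≠ 0 := by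
    rwa [ne_eq, ZMod.natCast_eq_zero_iff, ← (Fact.out : p.Prime).coprime_iff_not_dvd,
      Nat.coprime_comm]
  rw [intCast_log_smul_pow hK h0]
  exact mul_ne_zero hk' hβ

lemma eq_of_map_smul_pow_eq (hK : ∀ c : K, (p : ℤ) ∣ log (w (algebraMap K M c)))
    (hβ : ¬ (p : ℤ) ∣ log (w β)) (i j : Fin p) (c d : K) (h0 : w (c • β ^ (i : ℕ)) ≠ 0)
    (h : w (c • β ^ (i : ℕ)) = w (d • β ^ (j : ℕ))) : i = j := by
  rw [← ZMod.intCast_zmod_eq_zero_iff_dvd] at hβ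
  have hij : ((i : ℕ) : ZMod p) = (j : ℕ) := by
    refine mul_right_cancel₀ hβ ?_
    rw [← intCast_log_smul_pow hK h0, h, intCast_log_smul_pow hK (h ▸ h0)]
  rw [ZMod.natCast_eq_natCast_iff', Nat.mod_eq_of_lt i.2, Nat.mod_eq_of_lt j.2] at hij
  exact Fin.ext hij

lemma exists_leading_smul_pow (hK : ∀ c : K, (p : ℤ) ∣ log (w (algebraMap K M c)))
    (hβ : ¬ (p : ℤ) ∣ log (w β)) (hdeg : Module.finrank K M = p) (x : M) :
    ∃ c : Fin p → K, x = ∑ k, c k • β ^ (k : ℕ) ∧ ∃ i, w x = w (c i • β ^ (i : ℕ)) ∧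
      ∀ k, w (c k • β ^ (k : ℕ)) ≤ w (c i • β ^ (i : ℕ)) := by
  have : NeZero p := ⟨(Fact.out : p.Prime).ne_zero⟩
  have hβ0 : β ≠ 0 := by
    rintro rfl
    simp at hβ
  have hli : LinearIndependent K fun k : Fin p ↦ β ^ (k : ℕ) :=
    linearIndependent_of_map_smul_injective w (fun _ ↦ pow_ne_zero _ hβ0)
      (eq_of_map_smul_pow_eq hK hβ)
  let B := basisOfLinearIndependentOfCardEqFinrank hli (by rw [Fintype.card_fin, hdeg])
  have hx : ∑ k, B.repr x k • β ^ (k : ℕ) = x := by simpa [B] using B.sum_repr x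
  obtain ⟨i, -, hi, hmax⟩ := exists_map_sum_eq_of_injOn w Finset.univ_nonempty
    fun i _ j _ ↦ eq_of_map_smul_pow_eq hK hβ i j (B.repr x i) (B.repr x j)
  exact ⟨B.repr x, hx.symm, i, (congrArg w hx).symm.trans hi, fun k ↦ hmax k (Finset.mem_univ k)⟩

lemma adjoin_eq_top_of_not_dvd (hK : ∀ c : K, (p : ℤ) ∣ log (w (algebraMap K M c)))
    (hβ : ¬ (p : ℤ) ∣ log (w β)) (hdeg : Module.finrank K M = p) :
    IntermediateField.adjoin K {β} = ⊤ := by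
  refine eq_top_iff.2 fun x _ ↦ ?_
  obtain ⟨c, rfl, -⟩ := exists_leading_smul_pow hK hβ hdeg x
  exact sum_mem fun k _ ↦ IntermediateField.smul_mem _
    (pow_mem (IntermediateField.mem_adjoin_simple_self K β) _)

lemma map_sub_le_of_smul_eq (hK : ∀ c : K, (p : ℤ) ∣ log (w (algebraMap K M c)))
    (hβ : ¬ (p : ℤ) ∣ log (w β)) (hdeg : Module.finrank K M = p) {η : K}
    (hη : IsPrimitiveRoot η p) {σ : M ≃ₐ[K] M} (hσ : σ β = η • β) {x : M} (hx : w x ≤ 1) :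
    w (σ x - x) ≤ exp (-1) * w (algebraMap K M η - 1) := by
  have hp : p.Prime := Fact.out
  obtain ⟨c, hsum, i, hi, hmax⟩ := exists_leading_smul_pow hK hβ hdeg x
  rw [hsum, map_sum, ← Finset.sum_sub_distrib]
  refine w.map_sum_le fun k _ ↦ ?_
  rcases eq_or_ne (k : ℕ) 0 with hk0 | hk0
  · simp [hk0]
  have hk : (k : ℕ).Coprime p := (Nat.coprime_of_lt_prime hk0 k.2 hp).symm
  rw [map_apply_smul_pow_sub w hp.ne_zero hη hσ _ hk]
  gcongr
  rcases eq_or_ne (w (c k • β ^ (k : ℕ))) 0 with h0 | h0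
  · exact h0 ▸ zero_le
  have hle : log (w (c k • β ^ (k : ℕ))) ≤ 0 := by
    rw [log_le_iff_le_exp h0, exp_zero]
    exact (hmax k).trans (hi ▸ hx)
  have hne : log (w (c k • β ^ (k : ℕ))) ≠ 0 := fun h ↦
    not_dvd_log_smul_pow hK hβ hk h0 (h ▸ dvd_zero _)
  rw [← log_le_iff_le_exp h0]
  lia

lemma exists_map_sub_eq_of_smul_eq (hK : ∀ c : K, (p : ℤ) ∣ log (w (algebraMap K M c)))
    (hβ : ¬ (p : ℤ) ∣ log (w β)) (hdeg : Module.finrank K M = p) {η : K}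
    (hη : IsPrimitiveRoot η p) {σ : M ≃ₐ[K] M} (hσ : σ β = η • β) {π : M}
    (hπ : ¬ (p : ℤ) ∣ log (w π)) :
    ∃ y, w y = w π ∧ w (σ y - y) = w π * w (algebraMap K M η - 1) := by
  have hp : p.Prime := Fact.out
  obtain ⟨c, -, i, hi, -⟩ := exists_leading_smul_pow hK hβ hdeg π
  have hi0 : (i : ℕ) ≠ 0 := by
    intro h0
    rw [hi, h0, pow_zero, ← Algebra.algebraMap_eq_smul_one] at hπ
    exact hπ (hK (c i))
  refine ⟨c i • β ^ (i : ℕ), hi.symm, ?_⟩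
  rw [map_apply_smul_pow_sub w hp.ne_zero hη hσ _ (Nat.coprime_of_lt_prime hi0 i.2 hp).symm, hi]

end KummerExpansion


section RamificationJump

variable {p : ℕ} [Fact p.Prime] {K M : Type*} [Field K] [Field M] [Algebra ℚ_[p] M] [Algebra K M]

lemma one_mem_ramSet (i : ℕ) : (1 : M ≃ₐ[K] M) ∈ ramSet p K M i :=
  fun _ ↦ ⟨0, zero_mem _, (sub_self _).symm⟩

lemma hasUniqueRamJump_of_mem_ramSet_iff [Nontrivial (M ≃ₐ[K] M)] {t : ℕ}
    (h : ∀ σ : M ≃ₐ[K] M, σ ≠ 1 → ∀ i, σ ∈ ramSet p K M i ↔ i ≤ t) :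
    HasUniqueRamJump p K M t := by
  obtain ⟨σ, hσ⟩ := exists_ne (1 : M ≃ₐ[K] M)
  refine ⟨fun heq ↦ ?_, fun t' ht' ↦ ?_⟩
  · exact t.not_succ_le_self ((h σ hσ _).1 (heq ▸ (h σ hσ t).2 le_rfl))
  · contrapose! ht'
    refine not_not.2 (Set.ext fun τ ↦ ?_)
    rcases eq_or_ne τ 1 with rfl | hτ
    · exact iff_of_true (one_mem_ramSet _) (one_mem_ramSet _)
    · rw [h τ hτ, h τ hτ]
      lia

variable [FiniteDimensional ℚ_[p] M]

lemma mem_ramSet_iff {i : ℕ} {σ : M ≃ₐ[K] M} :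
    σ ∈ ramSet p K M i ↔
      ∀ x, normalizedVal p M x ≤ 1 → normalizedVal p M (σ x - x) ≤ exp (-((i + 1 : ℕ) : ℤ)) := by
  simp only [← exists_mem_maxIdeal_pow_iff, ← mem_ringOfInt_iff_normalizedVal_le_one]
  exact ⟨fun h x hx ↦ h ⟨x, hx⟩, fun h x ↦ h x x.2⟩

lemma mem_ramSet_iff_le_of_smul_eq
    (hK : ∀ c : K, (p : ℤ) ∣ log (normalizedVal p M (algebraMap K M c)))
    {β : M} (hβ : ¬ (p : ℤ) ∣ log (normalizedVal p M β)) (hdeg : Module.finrank K M = p) {η : K}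
    (hη : IsPrimitiveRoot η p) {σ : M ≃ₐ[K] M} (hσ : σ β = η • β) {t : ℕ}
    (ht : normalizedVal p M (algebraMap K M η - 1) = exp (-(t : ℤ))) {i : ℕ} :
    σ ∈ ramSet p K M i ↔ i ≤ t := by
  rw [mem_ramSet_iff]
  refine ⟨fun h ↦ ?_, fun hi x hx ↦ ?_⟩
  · obtain ⟨π, hπ⟩ := exists_normalizedVal_eq_exp_neg_one p M
    have hπp : ¬ (p : ℤ) ∣ log (normalizedVal p M π) := by
      rw [hπ, log_exp, dvd_neg]
      exact_mod_cast (Fact.out : p.Prime).not_dvd_one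
    obtain ⟨y, hy, hσy⟩ := exists_map_sub_eq_of_smul_eq hK hβ hdeg hη hσ hπp
    have hle := h y (by rw [hy, hπ, ← exp_zero, exp_le_exp]; lia)
    rw [hσy, hπ, ht, ← exp_add, exp_le_exp] at hle
    lia
  · refine (map_sub_le_of_smul_eq hK hβ hdeg hη hσ hx).trans ?_
    rw [ht, ← exp_add, exp_le_exp]
    lia

lemma normalizedVal_sub_one_of_isPrimitiveRoot {ζ : M} (hζ : IsPrimitiveRoot ζ p) {t : ℕ}
    (ht : (p - 1) * t = eAbs p M) : normalizedVal p M (ζ - 1) = exp (-(t : ℤ)) := by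
  have hp : p.Prime := Fact.out
  have h0 : normalizedVal p M (ζ - 1) ≠ 0 :=
    (Valuation.ne_zero_iff _).2 (sub_ne_zero.2 (hζ.ne_one hp.one_lt))
  have hlog := log_normalizedVal_prime p M
  rw [map_natCast_prime_eq_pow_of_isPrimitiveRoot _ hp hζ, log_pow, nsmul_eq_mul, ← ht,
    Nat.cast_mul, ← mul_neg] at hlog
  rw [← exp_log h0, mul_left_cancel₀ (Nat.cast_ne_zero.2 (Nat.sub_ne_zero_of_lt hp.one_lt)) hlog]

theorem hasUniqueRamJump_of_pow_eq_algebraMap [Algebra ℚ_[p] K] [IsScalarTower ℚ_[p] K M]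
    (hdeg : Module.finrank K M = p) (he : eAbs p M = p * eAbs p K) {ζ : K}
    (hζ : IsPrimitiveRoot ζ p) {b : K} {β : M} (hb : β ^ p = algebraMap K M b)
    (hβ : ¬ (p : ℤ) ∣ log (normalizedVal p M β)) {t : ℕ} (ht : (p - 1) * t = eAbs p M) :
    HasUniqueRamJump p K M t := by
  have hp : p.Prime := Fact.out
  have : FiniteDimensional ℚ_[p] K := .left ℚ_[p] K M
  have : FiniteDimensional K M := .right ℚ_[p] K M
  have hK (c : K) : (p : ℤ) ∣ log (normalizedVal p M (algebraMap K M c)) :=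
    ⟨_, log_normalizedVal_algebraMap he c⟩
  have htop := adjoin_eq_top_of_not_dvd hK hβ hdeg
  have hroots : (primitiveRoots p K).Nonempty := ⟨ζ, (mem_primitiveRoots hp.pos).2 hζ⟩
  have hirr : Irreducible (Polynomial.X ^ p - Polynomial.C b) := by
    simpa only [hdeg] using
      irreducible_X_pow_sub_C_of_root_adjoin_eq_top (hdeg.symm ▸ hb) htop
  have : Polynomial.IsSplittingField K M (Polynomial.X ^ p - Polynomial.C b) := by
    simpa only [hdeg] using
      isSplittingField_X_pow_sub_C_of_root_adjoin_eq_top (hdeg.symm ▸ hroots) (hdeg.symm ▸ hb) htop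
  have : IsGalois K M := isGalois_of_isSplittingField_X_pow_sub_C hroots hirr M
  have : Nontrivial (M ≃ₐ[K] M) := by
    rw [← Finite.one_lt_card_iff_nontrivial, IsGalois.card_aut_eq_finrank, hdeg]
    exact hp.one_lt
  refine hasUniqueRamJump_of_mem_ramSet_iff fun σ hσ i ↦ ?_
  obtain ⟨η, hη, hση⟩ := exists_isPrimitiveRoot_smul_eq hroots hb hirr hσ
  exact mem_ramSet_iff_le_of_smul_eq hK hβ hdeg hη hση
    (normalizedVal_sub_one_of_isPrimitiveRoot
      (hη.map_of_injective (algebraMap K M).injective) ht)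

end RamificationJump

lemma pow_pow_eq_of_pow_succ_eq {M : Type*} [Monoid M] {n : ℕ} {α : ℕ → M}
    (hα : ∀ s, α (s + 1) ^ n = α s) (s : ℕ) : α s ^ n ^ s = α 0 := by
  induction s with
  | zero => simp
  | succ s ih => rw [pow_succ', pow_mul, hα, ih]

theorem jump_L1s_of_not_dvd_val_general (p : ℕ) [Fact p.Prime] (F Ω : Type*) [Field F] [Field Ω]
    [Algebra ℚ_[p] F] [FiniteDimensional ℚ_[p] F]
    [Algebra F Ω] [Algebra ℚ_[p] Ω] [IsScalarTower ℚ_[p] F Ω]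
    (a : F) (hv : ¬ (p : ℤ) ∣ log (normalizedVal p F a)) (s : ℕ)
    (ζ : Ω) (hζ : IsPrimitiveRoot ζ p)
    (β : Ω) (hβ : β ^ p ^ (s + 1) = algebraMap F Ω a)
    (K M : IntermediateField F Ω) (hKM : K ≤ M) (hζK : ζ ∈ K) (hβK : β ^ p ∈ K) (hβM : β ∈ M)
    (hdegK : Module.finrank F K = p ^ s * (p - 1))
    (hdegM : Module.finrank F M = p ^ (s + 1) * (p - 1))
    (hramK : eAbs p K = Module.finrank F K * eAbs p F)
    (hramM : eAbs p M = Module.finrank F M * eAbs p F) :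
    HasUniqueRamJumpHom p K M (IntermediateField.inclusion hKM).toRingHom
      (p ^ (s + 1) * eAbs p F) := by
  have hp : p.Prime := Fact.out
  have hpred : p - 1 ≠ 0 := Nat.sub_ne_zero_of_lt hp.one_lt
  let : Algebra K M := (IntermediateField.inclusion hKM).toRingHom.toAlgebra
  have : IsScalarTower F K M := .of_algebraMap_eq fun _ ↦ rfl
  have : IsScalarTower ℚ_[p] K M := .of_algebraMap_eq fun _ ↦ rfl
  have : FiniteDimensional F M := FiniteDimensional.of_finrank_pos
    (hdegM ▸ Nat.pos_of_ne_zero (mul_ne_zero (pow_ne_zero _ hp.ne_zero) hpred))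
  have : FiniteDimensional ℚ_[p] M := Module.Finite.trans F M
  have hdeg : Module.finrank K M = p := by
    have hmul := Module.finrank_mul_finrank F K M
    rw [hdegM, hdegK, pow_succ, mul_right_comm (p ^ s) p] at hmul
    exact mul_left_cancel₀ (mul_ne_zero (pow_ne_zero _ hp.ne_zero) hpred) hmul
  have hβa : (⟨β, hβM⟩ : M) ^ p ^ (s + 1) = algebraMap F M a := Subtype.ext hβ
  have hvβ : ¬ (p : ℤ) ∣ log (normalizedVal p M ⟨β, hβM⟩) := by
    rw [log_normalizedVal_of_pow_eq_algebraMap (pow_ne_zero _ hp.ne_zero) (hdegM ▸ hramM) hβa,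
      (Nat.prime_iff_prime_int.1 hp).dvd_mul, Int.natCast_dvd_natCast, not_or]
    exact ⟨Nat.not_dvd_of_pos_of_lt (Nat.pos_of_ne_zero hpred) (Nat.sub_one_lt hp.ne_zero), hv⟩
  refine hasUniqueRamJump_of_pow_eq_algebraMap (ζ := ⟨ζ, hζK⟩) (b := ⟨β ^ p, hβK⟩) hdeg ?_
    (.of_map_of_injective (f := K.val) hζ K.val.injective) rfl hvβ ?_
  · rw [hramM, hramK, hdegM, hdegK]
    ring
  · rw [hramM, hdegM]
    ring

/-- Let `p` be an odd prime, `F/ℚ_p` finite unramified, `a ∈ 𝒪_F \ 𝒪_F^p` with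
`p ∤ v_F(a)`, and `L_{1,s} = F(ζ_p, a^{1/p^s})`, assumed totally ramified over `F` of
degree `p^s(p-1)`.  Then the unique ramification jump of `L_{1,s+1}/L_{1,s}` equals
`p^{s+1}`. -/
theorem jump_L1s_of_not_dvd_val (p : ℕ) [Fact p.Prime] (hp : p ≠ 2)
    (F Ω : Type*) [Field F] [Field Ω]
    [Algebra ℚ_[p] F] [FiniteDimensional ℚ_[p] F]
    (hunram : maxIdeal p F = Ideal.span {(p : ringOfInt p F)})
    [Algebra F Ω] [Algebra ℚ_[p] Ω] [IsScalarTower ℚ_[p] F Ω]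
    (a : F) (haO : a ∈ ringOfInt p F) (haP : ¬∃ b ∈ ringOfInt p F, b ^ p = a)
    (hv : ¬p ∣ valInt p F a)
    (ζ : Ω) (hζ : IsPrimitiveRoot ζ p)
    (α : ℕ → Ω) (hα0 : α 0 = algebraMap F Ω a) (hαp : ∀ s, α (s + 1) ^ p = α s)
    (L : ℕ → IntermediateField F Ω)
    (hL : ∀ s, L s = IntermediateField.adjoin F {ζ, α s})
    (hmono : ∀ s, L s ≤ L (s + 1))
    (hdeg : ∀ s, Module.finrank F ↥(L s) = p ^ s * (p - 1))
    (hram : ∀ s, eAbs p ↥(L s) = Module.finrank F ↥(L s) * eAbs p F)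
    (s : ℕ) :
    HasUniqueRamJumpHom p ↥(L s) ↥(L (s + 1))
      (IntermediateField.inclusion (hmono s)).toRingHom (p ^ (s + 1)) := by
  have hζL (s) : ζ ∈ L s := hL s ▸ IntermediateField.subset_adjoin _ _ (by simp)
  have hαL (s) : α s ∈ L s := hL s ▸ IntermediateField.subset_adjoin _ _ (by simp)
  have ha0 : a ≠ 0 := by
    rintro rfl
    exact haP ⟨0, zero_mem _, zero_pow (NeZero.ne p)⟩
  have hvF : ¬ (p : ℤ) ∣ log (normalizedVal p F a) := by
    rwa [log_normalizedVal_eq_neg_valInt ha0 haO, dvd_neg, Int.natCast_dvd_natCast]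
  simpa [eAbs_eq_one_of_maxIdeal_eq_span hunram] using
    jump_L1s_of_not_dvd_val_general p F Ω a hvF s ζ hζ (α (s + 1))
      ((pow_pow_eq_of_pow_succ_eq hαp (s + 1)).trans hα0) (L s) (L (s + 1)) (hmono s) (hζL s)
      (hαp s ▸ hαL s) (hαL (s + 1)) (hdeg s) (hdeg (s + 1)) (hram s) (hram (s + 1))
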